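/- arXiv:1405.5293 — 5 statements merged into one kernel-verified Lean document; each statement's English description precedes it below -/
import Mathlib

section
/- For every ideal I of the polynomial ring R = ℂ[x₁,…,xₙ], the Macaulay dual space of I at the origin equals the Macaulay dual space of its extension to the localization at the origin; concretely, a functional p ∈ D₀ satisfies p(f) = 0 for all f ∈ I if and only if p(g) = 0 for all g in the contraction IR₀ ∩ R = {g ∈ R : there exists h ∈ R with h(0) ≠ 0 and h·g ∈ I}. -/
open MvPolynomial

noncomputable section

/-- The polynomial ring `R = ℂ[x₁,…,xₙ]`. -/
abbrev Rn (n : ℕ) := MvPolynomial (Fin n) ℂ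

/-- Total degree of a monomial exponent vector. -/
def mdeg {n : ℕ} (m : Fin n →₀ ℕ) : ℕ := m.sum fun _ e => e

/-- The truncated dual space `D₀^d`: linear functionals on `R` vanishing on all
monomials of degree greater than `d` (identified with `(R_d)*`). -/
def DualTrunc (n d : ℕ) : Submodule ℂ (Module.Dual ℂ (Rn n)) where
  carrier := {p | ∀ m : Fin n →₀ ℕ, d < mdeg m → p (monomial m 1) = 0}
  add_mem' := by
    intro p q hp hq m hm
    simp [hp m hm, hq m hm]
  zero_mem' := by
    intro m hm
    simp
  smul_mem' := by
    intro c p hp m hm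
    simp [hp m hm]

/-- The Macaulay dual space `D₀` at the origin: linear functionals on `R` vanishing
on all monomials of sufficiently large degree, i.e. `⋃ d, D₀^d`. -/
def MacaulayDual (n : ℕ) : Submodule ℂ (Module.Dual ℂ (Rn n)) where
  carrier := {p | ∃ d : ℕ, ∀ m : Fin n →₀ ℕ, d < mdeg m → p (monomial m 1) = 0}
  add_mem' := by
    rintro p q ⟨d₁, hp⟩ ⟨d₂, hq⟩
    refine ⟨max d₁ d₂, fun m hm => ?_⟩
    simp [hp m (lt_of_le_of_lt (le_max_left _ _) hm),
          hq m (lt_of_le_of_lt (le_max_right _ _) hm)]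
  zero_mem' := ⟨0, fun m _ => rfl⟩
  smul_mem' := by
    rintro c p ⟨d, hp⟩
    exact ⟨d, fun m hm => by simp [hp m hm]⟩

/-- The space of linear functionals annihilating an ideal `I`. -/
def annIdeal {n : ℕ} (I : Ideal (Rn n)) : Submodule ℂ (Module.Dual ℂ (Rn n)) where
  carrier := {p | ∀ f ∈ I, p f = 0}
  add_mem' := by
    intro p q hp hq f hf
    simp [hp f hf, hq f hf]
  zero_mem' := by intro f _; rfl
  smul_mem' := by
    intro c p hp f hf
    simp [hp f hf]

/-- The Macaulay dual space `D₀[I] = {p ∈ D₀ : p(f) = 0 for all f ∈ I}`. -/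
def dualOf {n : ℕ} (I : Ideal (Rn n)) : Submodule ℂ (Module.Dual ℂ (Rn n)) :=
  MacaulayDual n ⊓ annIdeal I

/-- The truncated dual space `D₀^d[I] = D₀[I] ∩ D₀^d`. -/
def truncDualOf {n : ℕ} (I : Ideal (Rn n)) (d : ℕ) : Submodule ℂ (Module.Dual ℂ (Rn n)) :=
  DualTrunc n d ⊓ annIdeal I

/-- The contraction `IR₀ ∩ R` of the extension of `I` to the localization at the
origin: `{g ∈ R : ∃ h ∈ R with h(0) ≠ 0 and h·g ∈ I}`. -/
def contraction {n : ℕ} (I : Ideal (Rn n)) : Set (Rn n) :=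
  {g | ∃ h : Rn n, eval (0 : Fin n → ℂ) h ≠ 0 ∧ h * g ∈ I}

/-- The maximal ideal `m = ⟨x₁,…,xₙ⟩` at the origin, as the kernel of evaluation at `0`. -/
def mIdeal (n : ℕ) : Ideal (Rn n) := RingHom.ker (eval (0 : Fin n → ℂ))

instance (n : ℕ) : (mIdeal n).IsPrime := RingHom.ker_isPrime _

/-- The localization `R₀` of `R` at the maximal ideal of the origin. -/
abbrev Loc (n : ℕ) := Localization.AtPrime (mIdeal n)

/-- The extension `JR₀` of an ideal `J ⊆ R` to the localization `R₀`. -/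
def extIdeal {n : ℕ} (J : Ideal (Rn n)) : Ideal (Loc n) :=
  J.map (algebraMap (Rn n) (Loc n))

/-- Differentiation `σ_f : D₀ → D₀` by `f ∈ R`, `(σ_f p)(g) = p (f * g)`. -/
def sigma {n : ℕ} (f : Rn n) : Module.Dual ℂ (Rn n) →ₗ[ℂ] Module.Dual ℂ (Rn n) :=
  (LinearMap.mulLeft ℂ f).dualMap

/-- A graded monomial order on exponent vectors in `ℕⁿ`: a strict total order
compatible with addition and refining total degree. -/
structure IsGradedMonomialOrder {n : ℕ} (lt : (Fin n →₀ ℕ) → (Fin n →₀ ℕ) → Prop) : Prop where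
  irrefl : ∀ a, ¬ lt a a
  trans : ∀ a b c, lt a b → lt b c → lt a c
  total : ∀ a b, a ≠ b → lt a b ∨ lt b a
  add_compat : ∀ a b c, lt a b → lt (a + c) (b + c)
  deg_compat : ∀ a b, mdeg a < mdeg b → lt a b

/-- `β` is the lead monomial of `g` for the graded local order associated to `lt`:
the `lt`-minimal monomial of `g` with nonzero coefficient. -/
def IsLeadMonomial {n : ℕ} (lt : (Fin n →₀ ℕ) → (Fin n →₀ ℕ) → Prop)
    (g : Rn n) (β : Fin n →₀ ℕ) : Prop :=
  coeff β g ≠ 0 ∧ ∀ γ : Fin n →₀ ℕ, coeff γ g ≠ 0 → γ ≠ β → lt β γ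

/-- The initial ideal `in_≥(IR₀) ∩ R`: the monomial ideal of `R` generated by the
lead monomials of nonzero elements of the contraction `IR₀ ∩ R`. -/
def initialIdeal {n : ℕ} (lt : (Fin n →₀ ℕ) → (Fin n →₀ ℕ) → Prop)
    (I : Ideal (Rn n)) : Ideal (Rn n) :=
  Ideal.span {q | ∃ g ∈ contraction I, g ≠ 0 ∧
    ∃ β : Fin n →₀ ℕ, IsLeadMonomial lt g β ∧ q = monomial β 1}

/-- `∂^α` is (up to the scalar `p(x^α)`) the initial term of the dual functional `p`:
`α` is the `lt`-maximal monomial with nonzero coefficient in `p`. -/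
def IsInitialOf {n : ℕ} (lt : (Fin n →₀ ℕ) → (Fin n →₀ ℕ) → Prop)
    (p : Module.Dual ℂ (Rn n)) (α : Fin n →₀ ℕ) : Prop :=
  p (monomial α 1) ≠ 0 ∧ ∀ β : Fin n →₀ ℕ, p (monomial β 1) ≠ 0 → β ≠ α → lt β α

/-!
If `h(0)` is a unit, then `h` is invertible modulo `𝔪 = ⟨x₁,…,xₙ⟩`, hence modulo every power of
`𝔪`. So `h * g ∈ I` puts `g` in `I + 𝔪 ^ k` for all `k`, while a functional in `D₀` vanishes on
`𝔪 ^ k` once `k` is large.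
-/

section Ideal

variable {A : Type*} [CommRing A] {I J : Ideal A} {g h : A}

lemma mem_sup_of_isUnit_mk_of_mul_mem (hh : IsUnit (Ideal.Quotient.mk J h)) (hg : h * g ∈ I) :
    g ∈ I ⊔ J := by
  have hmap : Ideal.Quotient.mk J h * Ideal.Quotient.mk J g ∈ I.map (Ideal.Quotient.mk J) := by
    rw [← map_mul]
    exact Ideal.mem_map_of_mem _ hg
  rw [← Ideal.mem_quotient_iff_mem_sup]
  exact (Ideal.unit_mul_mem_iff_mem _ hh).mp hmap

lemma mem_sup_pow_of_isUnit_mk_of_mul_mem (hh : IsUnit (Ideal.Quotient.mk J h))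
    (hg : h * g ∈ I) (k : ℕ) : g ∈ I ⊔ J ^ k := by
  obtain rfl | hk := eq_or_ne k 0
  · simp
  · have hh_pow := (Ideal.Quotient.isUnit_mk_pow_iff_isUnit_mk J hk).mpr hh
    exact mem_sup_of_isUnit_mk_of_mul_mem hh_pow hg

end Ideal

section MvPolynomial

variable {σ R M : Type*} [CommRing R] [AddCommGroup M] [Module R M]

lemma sub_C_constantCoeff_mem_idealOfVars (f : MvPolynomial σ R) :
    f - C (constantCoeff f) ∈ idealOfVars σ R := by
  rw [← pow_one (idealOfVars σ R), mem_pow_idealOfVars_iff']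
  intro m hm
  obtain rfl : m = 0 := (Finsupp.degree_eq_zero_iff m).mp (Nat.lt_one_iff.mp hm)
  simp [constantCoeff_eq]

lemma isUnit_mk_idealOfVars_of_isUnit_constantCoeff {h : MvPolynomial σ R}
    (hh : IsUnit (constantCoeff h)) : IsUnit (Ideal.Quotient.mk (idealOfVars σ R) h) := by
  rw [Ideal.Quotient.eq.mpr (sub_C_constantCoeff_mem_idealOfVars h)]
  exact (hh.map C).map _

lemma map_eq_zero_of_mem_pow_idealOfVars {p : MvPolynomial σ R →ₗ[R] M} {k : ℕ}
    (hp : ∀ m : σ →₀ ℕ, k ≤ m.degree → p (monomial m 1) = 0) {f : MvPolynomial σ R}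
    (hf : f ∈ idealOfVars σ R ^ k) : p f = 0 := by
  rw [mem_pow_idealOfVars_iff] at hf
  rw [f.as_sum, map_sum]
  refine Finset.sum_eq_zero fun m hm => ?_
  rw [← mul_one (coeff m f), ← smul_eq_mul, ← smul_monomial, map_smul, hp m (hf m hm), smul_zero]

theorem dual_eq_dual_of_localization_general (I : Ideal (MvPolynomial σ R))
    (p : MvPolynomial σ R →ₗ[R] M)
    (hp : ∃ d : ℕ, ∀ m : σ →₀ ℕ, d < m.degree → p (monomial m 1) = 0) :
    (∀ f ∈ I, p f = 0) ↔ ∀ g, (∃ h, IsUnit (constantCoeff h) ∧ h * g ∈ I) → p g = 0 := by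
  constructor
  · rintro hI g ⟨h, hh, hg⟩
    obtain ⟨d, hd⟩ := hp
    have hg_mem : g ∈ I ⊔ idealOfVars σ R ^ (d + 1) :=
      mem_sup_pow_of_isUnit_mk_of_mul_mem
        (isUnit_mk_idealOfVars_of_isUnit_constantCoeff hh) hg (d + 1)
    obtain ⟨f, hf, u, hu, rfl⟩ := Submodule.mem_sup.mp hg_mem
    rw [map_add, hI f hf, map_eq_zero_of_mem_pow_idealOfVars hd hu, add_zero]
  · intro hI f hf
    exact hI f ⟨1, by simp, by simpa using hf⟩

end MvPolynomial

/-- For every ideal `I` of `R = ℂ[x₁,…,xₙ]`, a functional `p ∈ D₀`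
annihilates `I` iff it annihilates the contraction `IR₀ ∩ R`. -/
theorem dual_eq_dual_of_localization (n : ℕ) (I : Ideal (Rn n))
    (p : Module.Dual ℂ (Rn n)) (hp : p ∈ MacaulayDual n) :
    (∀ f ∈ I, p f = 0) ↔ (∀ g ∈ contraction I, p g = 0) := by
  simpa only [contraction, Set.mem_ofPred_eq, isUnit_iff_ne_zero, ← eval_zero] using
    dual_eq_dual_of_localization_general I p hp
end
end

section
/- For every ideal I of R = ℂ[x₁,…,xₙ], the orthogonal of the Macaulay dual space D₀[I] recovers exactly the localized ideal: a polynomial g ∈ R satisfies p(g) = 0 for all p ∈ D₀[I] if and only if g lies in the contraction IR₀ ∩ R = {g ∈ R : there exists h ∈ R with h(0) ≠ 0 and h·g ∈ I}. -/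
open MvPolynomial

noncomputable section

/-!
A functional that kills all monomials of large degree is one that kills a power of
`m = ⟨x₁, …, xₙ⟩`, so by linear duality the orthogonal of `D₀[I]` is `⋂ d, (I + m ^ d)`.
Krull's intersection theorem for the module `R ⧸ I` identifies this intersection with the `g` such
that `(1 - r) * g ∈ I` for some `r ∈ m`, and since `m` is maximal the factors `1 - r` may be
replaced by arbitrary `h ∉ m`, that is, by `h` with `h(0) ≠ 0`.
-/

section Orthogonality

variable {A M : Type*} [CommRing A] [AddCommGroup M] [Module A M]

lemma mkQ_mem_smul_top_iff (J : Ideal A) (N : Submodule A M) (x : M) :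
    N.mkQ x ∈ J • (⊤ : Submodule A (M ⧸ N)) ↔ x ∈ N ⊔ J • (⊤ : Submodule A M) := by
  rw [← Submodule.comap_map_mkQ, Submodule.mem_comap, Submodule.map_smul'', Submodule.map_top,
    Submodule.range_mkQ]

lemma forall_mem_sup_pow_smul_top_iff [IsNoetherianRing A] [Module.Finite A M]
    (J : Ideal A) (N : Submodule A M) (x : M) :
    (∀ d : ℕ, x ∈ N ⊔ J ^ d • (⊤ : Submodule A M)) ↔ ∃ r ∈ J, (1 - r) • x ∈ N := by
  have krull := J.mem_iInf_smul_pow_eq_bot_iff (N.mkQ x)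
  simp only [Submodule.mem_iInf, mkQ_mem_smul_top_iff, Subtype.exists, exists_prop] at krull
  refine krull.trans (exists_congr fun r => and_congr_right fun _ => ?_)
  rw [← map_smul, eq_comm, ← sub_eq_zero, ← map_sub, ← LinearMap.mem_ker, Submodule.ker_mkQ,
    sub_smul, one_smul]

lemma exists_one_sub_smul_mem_iff_exists_notMem_smul_mem (J : Ideal A) [hJ : J.IsMaximal]
    (N : Submodule A M) (x : M) :
    (∃ r ∈ J, (1 - r) • x ∈ N) ↔ ∃ h ∉ J, h • x ∈ N := by
  constructor
  · rintro ⟨r, hr, hx⟩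
    refine ⟨1 - r, fun h => hJ.ne_top ((J.eq_top_iff_one).2 ?_), hx⟩
    simpa using J.add_mem h hr
  · rintro ⟨h, hh, hx⟩
    obtain ⟨y, r, hr, hyr⟩ := hJ.exists_inv hh
    refine ⟨r, hr, ?_⟩
    rw [← eq_sub_of_add_eq hyr, mul_smul]
    exact N.smul_mem y hx

variable (K : Type*) [Field K] [Algebra K A] [Module K M] [IsScalarTower K A M]

lemma forall_dual_apply_eq_zero_iff_mem_sup (N P : Submodule A M) (x : M) :
    (∀ p : Module.Dual K M, (∀ y ∈ N, p y = 0) → (∀ y ∈ P, p y = 0) → p x = 0) ↔ x ∈ N ⊔ P := by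
  rw [← Submodule.restrictScalars_mem K, ← Subspace.forall_mem_dualAnnihilator_apply_eq_zero_iff,
    Submodule.restrictScalars_sup, Submodule.dualAnnihilator_sup_eq]
  simp only [Submodule.mem_inf, Submodule.mem_dualAnnihilator, Submodule.restrictScalars_mem,
    and_imp]

lemma forall_dual_apply_eq_zero_iff_exists_notMem_smul_mem [IsNoetherianRing A]
    [Module.Finite A M] (J : Ideal A) [J.IsMaximal] (N : Submodule A M) (x : M) :
    (∀ p : Module.Dual K M, (∃ d : ℕ, ∀ y ∈ J ^ d • (⊤ : Submodule A M), p y = 0) →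
      (∀ y ∈ N, p y = 0) → p x = 0) ↔ ∃ h ∉ J, h • x ∈ N := by
  rw [← exists_one_sub_smul_mem_iff_exists_notMem_smul_mem, ← forall_mem_sup_pow_smul_top_iff]
  simp only [← forall_dual_apply_eq_zero_iff_mem_sup K]
  exact ⟨fun H d p hN hd => H p ⟨d, hd⟩ hN, fun H p ⟨d, hd⟩ hN => H d p hN hd⟩

end Orthogonality

section IdealOfVars

variable {σ R : Type*}

lemma restrictScalars_pow_idealOfVars_eq_span [CommSemiring R] (d : ℕ) :
    (idealOfVars σ R ^ d).restrictScalars R =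
      Submodule.span R ((monomial · 1) '' {m : σ →₀ ℕ | d ≤ m.degree}) := by
  rw [pow_idealOfVars, ← restrictSupport_eq_span]
  rfl

lemma forall_mem_pow_idealOfVars_apply_eq_zero_iff [CommSemiring R]
    (p : Module.Dual R (MvPolynomial σ R)) (d : ℕ) :
    (∀ f ∈ idealOfVars σ R ^ d, p f = 0) ↔
      ∀ m : σ →₀ ℕ, d ≤ m.degree → p (monomial m 1) = 0 := by
  change (idealOfVars σ R ^ d).restrictScalars R ≤ p.ker ↔ _
  rw [restrictScalars_pow_idealOfVars_eq_span, Submodule.span_le, Set.image_subset_iff]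
  rfl

lemma exists_forall_lt_degree_apply_monomial_eq_zero_iff [CommSemiring R]
    (p : Module.Dual R (MvPolynomial σ R)) :
    (∃ d : ℕ, ∀ m : σ →₀ ℕ, d < m.degree → p (monomial m 1) = 0) ↔
      ∃ d : ℕ, ∀ f ∈ idealOfVars σ R ^ d, p f = 0 := by
  simp only [forall_mem_pow_idealOfVars_apply_eq_zero_iff]
  exact ⟨fun ⟨d, hd⟩ => ⟨d + 1, hd⟩, fun ⟨d, hd⟩ => ⟨d, fun m hm => hd m hm.le⟩⟩

lemma idealOfVars_eq_ker_constantCoeff [CommSemiring R] :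
    idealOfVars σ R = RingHom.ker (constantCoeff (R := R) (σ := σ)) := by
  ext f
  rw [← pow_one (idealOfVars σ R), mem_pow_idealOfVars_iff']
  simp [Finsupp.degree_eq_zero_iff, constantCoeff_eq]

lemma isMaximal_idealOfVars [Field R] : (idealOfVars σ R).IsMaximal := by
  rw [idealOfVars_eq_ker_constantCoeff]
  exact RingHom.ker_isMaximal_of_surjective _ fun c => ⟨C c, constantCoeff_C σ c⟩

end IdealOfVars

theorem orthogonal_of_dual_space_general {σ K : Type*} [Finite σ] [Field K]
    (I : Ideal (MvPolynomial σ K)) (g : MvPolynomial σ K) :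
    (∀ p : Module.Dual K (MvPolynomial σ K),
      (∃ d : ℕ, ∀ m : σ →₀ ℕ, d < m.degree → p (monomial m 1) = 0) →
        (∀ f ∈ I, p f = 0) → p g = 0) ↔
      ∃ h : MvPolynomial σ K, eval (0 : σ → K) h ≠ 0 ∧ h * g ∈ I := by
  have : (idealOfVars σ K).IsMaximal := isMaximal_idealOfVars
  have notMem_iff (h : MvPolynomial σ K) : h ∉ idealOfVars σ K ↔ eval (0 : σ → K) h ≠ 0 := by
    rw [idealOfVars_eq_ker_constantCoeff, RingHom.mem_ker, eval_zero]
  have orthogonal_iff :=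
    forall_dual_apply_eq_zero_iff_exists_notMem_smul_mem K (idealOfVars σ K) I g
  simpa only [exists_forall_lt_degree_apply_monomial_eq_zero_iff, notMem_iff, smul_eq_mul,
    Ideal.mul_top] using orthogonal_iff

/-- The orthogonal of `D₀[I]` in `R` is exactly the contraction
`IR₀ ∩ R = {g ∈ R : ∃ h, h(0) ≠ 0 ∧ h·g ∈ I}`. -/
theorem orthogonal_of_dual_space (n : ℕ) (I : Ideal (Rn n)) (g : Rn n) :
    (∀ p ∈ dualOf I, p g = 0) ↔ g ∈ contraction I :=
  (forall_congr' fun _ => and_imp).trans (orthogonal_of_dual_space_general I g)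
end
end

section
/- Let I be an ideal of R = ℂ[x₁,…,xₙ] such that the origin is an isolated point of the zero set of I (equivalently, the local ring R₀/IR₀ is a finite-dimensional ℂ-vector space). Then the multiplicity of the origin as a solution of I, namely dim_ℂ (R₀/IR₀), equals dim_ℂ D₀[I]; in particular D₀[I] is finite dimensional. -/
open MvPolynomial

noncomputable section

/-!
A functional in `D₀[I]` kills `I + 𝔪 ^ d` for some `d`. Elements outside `𝔪` are units modulo
`𝔪 ^ d`, so `IR₀ ∩ R ⊆ I + 𝔪 ^ d` for every `d`, and such a functional kills `IR₀ ∩ R`. Conversely,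
if `R₀ ⧸ IR₀` is finite-dimensional, hence Artinian, then `𝔪 ^ N ⊆ IR₀ ∩ R` for some `N`, so every
functional killing `IR₀ ∩ R` lies in `D₀[I]`. The same `N` makes `R → R₀ ⧸ 𝔪 ^ N R₀ → R₀ ⧸ IR₀`
surjective, with kernel `IR₀ ∩ R`, and therefore `D₀[I]` is the dual space of `R₀ ⧸ IR₀`.
-/

section LocalizationAtMaximal

variable {A : Type*} [CommRing A] (m : Ideal A) [m.IsMaximal]
variable (Aₘ : Type*) [CommRing Aₘ] [Algebra A Aₘ]

theorem under_map_le_sup_pow [IsLocalization.AtPrime Aₘ m] (I : Ideal A) (d : ℕ) :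
    (I.map (algebraMap A Aₘ)).under A ≤ I ⊔ m ^ d := by
  intro g hg
  obtain ⟨s, hs, hsg⟩ :=
    (IsLocalization.algebraMap_mem_map_algebraMap_iff m.primeCompl Aₘ I g).mp hg
  obtain ⟨t, ht⟩ := (Ideal.Quotient.isUnit_mk_pow_of_notMem m (n := d) hs).exists_left_inv
  obtain ⟨t, rfl⟩ := Ideal.Quotient.mk_surjective t
  have one_sub_mem : 1 - t * s ∈ m ^ d := Ideal.Quotient.eq.mp ht.symm
  rw [show g = t * (s * g) + (1 - t * s) * g by ring]
  exact Submodule.add_mem_sup (I.mul_mem_left t hsg) (Ideal.mul_mem_right g _ one_sub_mem)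

variable {Aₘ}

theorem exists_pow_le_under [IsLocalization.AtPrime Aₘ m] (J : Ideal Aₘ) [IsArtinianRing (Aₘ ⧸ J)] :
    ∃ N, m ^ N ≤ J.under A := by
  have : IsLocalRing Aₘ := IsLocalization.AtPrime.isLocalRing Aₘ m
  obtain ⟨N, hN⟩ := IsLocalRing.exists_maximalIdeal_pow_le_of_isArtinianRing_quotient J
  refine ⟨N, ?_⟩
  rw [← IsLocalization.AtPrime.under_maximalIdeal_pow m Aₘ N]
  exact Ideal.comap_mono hN

theorem algebraMap_quotient_surjective [IsLocalization.AtPrime Aₘ m] (J : Ideal Aₘ)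
    [IsArtinianRing (Aₘ ⧸ J)] : Function.Surjective (algebraMap A (Aₘ ⧸ J)) := by
  have : IsLocalRing Aₘ := IsLocalization.AtPrime.isLocalRing Aₘ m
  obtain ⟨N, hN⟩ := IsLocalRing.exists_maximalIdeal_pow_le_of_isArtinianRing_quotient J
  exact (Ideal.Quotient.factor_surjective hN).comp <|
    (IsLocalization.AtPrime.equivQuotMaximalIdealPow m Aₘ N).surjective.comp
      Ideal.Quotient.mk_surjective

end LocalizationAtMaximal

section InverseSystem

variable (k : Type*) {A : Type*} [CommRing k] [CommRing A] [Algebra k A] (m : Ideal A)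

/-- Macaulay's inverse system of the ideal `I` at `m`: the functionals on `A` that vanish on
`I + m ^ d` for some `d`. The union over `d` is increasing, so it is encoded as a supremum. -/
def inverseSystem (I : Ideal A) : Submodule k (Module.Dual k A) :=
  ⨆ d : ℕ, ((I ⊔ m ^ d).restrictScalars k).dualAnnihilator

variable {k m} in
theorem mem_inverseSystem_iff {I : Ideal A} {p : Module.Dual k A} :
    p ∈ inverseSystem k m I ↔
      (∃ d : ℕ, p ∈ ((m ^ d).restrictScalars k).dualAnnihilator) ∧
        p ∈ (I.restrictScalars k).dualAnnihilator := by
  have annihilators_monotone :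
      Monotone fun d : ℕ => ((I ⊔ m ^ d).restrictScalars k).dualAnnihilator := fun d e hde =>
    Submodule.dualAnnihilator_anti (sup_le_sup_left (Ideal.pow_le_pow_right hde) I)
  rw [inverseSystem, Submodule.mem_iSup_of_directed _ annihilators_monotone.directed_le]
  simp only [Submodule.restrictScalars_sup, Submodule.dualAnnihilator_sup_eq, Submodule.mem_inf,
    exists_and_left, and_comm]

variable [m.IsMaximal] (Aₘ : Type*) [CommRing Aₘ] [Algebra A Aₘ] [IsLocalization.AtPrime Aₘ m]

theorem inverseSystem_eq_dualAnnihilator_under_map (I : Ideal A)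
    [IsArtinianRing (Aₘ ⧸ I.map (algebraMap A Aₘ))] :
    inverseSystem k m I =
      (((I.map (algebraMap A Aₘ)).under A).restrictScalars k).dualAnnihilator := by
  apply le_antisymm
  · exact iSup_le fun d => Submodule.dualAnnihilator_anti (under_map_le_sup_pow m Aₘ I d)
  · obtain ⟨N, hN⟩ := exists_pow_le_under m (I.map (algebraMap A Aₘ))
    exact le_iSup_of_le N (Submodule.dualAnnihilator_anti (sup_le Ideal.le_comap_map hN))

variable [Algebra k Aₘ] [IsScalarTower k A Aₘ]

/-- The inverse system of `I` at `m` is the dual space of the local ring `Aₘ ⧸ I Aₘ`. -/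
def dualQuotientEquivInverseSystem (I : Ideal A)
    [IsArtinianRing (Aₘ ⧸ I.map (algebraMap A Aₘ))] :
    Module.Dual k (Aₘ ⧸ I.map (algebraMap A Aₘ)) ≃ₗ[k] inverseSystem k m I :=
  let J := I.map (algebraMap A Aₘ)
  let φ : A →ₗ[k] Aₘ ⧸ J := (IsScalarTower.toAlgHom k A (Aₘ ⧸ J)).toLinearMap
  have ker_φ : LinearMap.ker φ = (J.under A).restrictScalars k := by
    ext a
    exact Ideal.Quotient.eq_zero_iff_mem
  (φ.quotKerEquivOfSurjective (algebraMap_quotient_surjective m J)).dualMap ≪≫ₗ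
    (LinearMap.ker φ).dualQuotEquivDualAnnihilator ≪≫ₗ
    LinearEquiv.ofEq _ _ (by rw [ker_φ, inverseSystem_eq_dualAnnihilator_under_map k m Aₘ I])

end InverseSystem

theorem multiplicity_eq_dim_dual_general {k A : Type*} [Field k] [CommRing A] [Algebra k A]
    (m : Ideal A) [m.IsMaximal] (Aₘ : Type*) [CommRing Aₘ] [Algebra A Aₘ]
    [IsLocalization.AtPrime Aₘ m] [Algebra k Aₘ] [IsScalarTower k A Aₘ] (I : Ideal A)
    (hfin : FiniteDimensional k (Aₘ ⧸ I.map (algebraMap A Aₘ))) :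
    FiniteDimensional k (inverseSystem k m I) ∧
      Module.finrank k (Aₘ ⧸ I.map (algebraMap A Aₘ)) =
        Module.finrank k (inverseSystem k m I) := by
  have : IsArtinianRing (Aₘ ⧸ I.map (algebraMap A Aₘ)) := IsArtinianRing.of_finite k _
  let e := dualQuotientEquivInverseSystem k m Aₘ I
  exact ⟨e.finiteDimensional, by rw [← e.finrank_eq, Subspace.dual_finrank_eq]⟩

section Polynomial

variable {σ R : Type*} [CommRing R]

theorem ker_eval_zero : RingHom.ker (eval (0 : σ → R)) = idealOfVars σ R := by
  ext f
  rw [← pow_one (idealOfVars σ R), mem_pow_idealOfVars_iff', RingHom.mem_ker, eval_zero,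
    constantCoeff_eq]
  simp [Finsupp.degree_eq_zero_iff]

theorem mem_dualAnnihilator_pow_idealOfVars_iff {d : ℕ} {p : Module.Dual R (MvPolynomial σ R)} :
    p ∈ ((idealOfVars σ R ^ d).restrictScalars R).dualAnnihilator ↔
      ∀ a : σ →₀ ℕ, d ≤ a.degree → p (monomial a 1) = 0 := by
  have span_monomials : (idealOfVars σ R ^ d).restrictScalars R =
      Submodule.span R ((monomial · 1) '' {a : σ →₀ ℕ | d ≤ a.degree}) := by
    rw [pow_idealOfVars]
    exact restrictSupport_eq_span R _
  rw [span_monomials, Submodule.mem_dualAnnihilator]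
  exact Submodule.span_le (p := LinearMap.ker p).trans Set.forall_mem_image

end Polynomial

instance (n : ℕ) : (mIdeal n).IsMaximal :=
  RingHom.ker_isMaximal_of_surjective _ fun c => ⟨C c, eval_C c⟩

theorem mem_MacaulayDual_iff {n : ℕ} {p : Module.Dual ℂ (Rn n)} :
    p ∈ MacaulayDual n ↔ ∃ d, p ∈ ((mIdeal n ^ d).restrictScalars ℂ).dualAnnihilator := by
  simp only [mIdeal, ker_eval_zero, mem_dualAnnihilator_pow_idealOfVars_iff]
  exact ⟨fun ⟨d, hd⟩ => ⟨d + 1, hd⟩, fun ⟨d, hd⟩ => ⟨d, fun a ha => hd a ha.le⟩⟩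

theorem dualOf_eq_inverseSystem {n : ℕ} (I : Ideal (Rn n)) :
    dualOf I = inverseSystem ℂ (mIdeal n) I := by
  ext p
  rw [mem_inverseSystem_iff, ← mem_MacaulayDual_iff, Submodule.mem_dualAnnihilator]
  rfl

/-- If the origin is an isolated solution of `I`, i.e. `R₀/IR₀` is a
finite-dimensional ℂ-vector space, then the multiplicity `dim_ℂ (R₀/IR₀)` equals
`dim_ℂ D₀[I]`; in particular `D₀[I]` is finite dimensional. -/
theorem multiplicity_eq_dim_dual (n : ℕ) (I : Ideal (Rn n))
    (hfin : FiniteDimensional ℂ (Loc n ⧸ extIdeal I)) :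
    FiniteDimensional ℂ (dualOf I) ∧
      Module.finrank ℂ (Loc n ⧸ extIdeal I) = Module.finrank ℂ (dualOf I) := by
  rw [dualOf_eq_inverseSystem]
  exact multiplicity_eq_dim_dual_general (mIdeal n) (Loc n) I hfin
end
end

section
/- Let I = ⟨f₁,…,f_s⟩ be an ideal of R = ℂ[x₁,…,xₙ] and let k ≥ 1. Then the degree-k truncated dual space of I is characterized inductively: D₀^k[I] = {p ∈ D₀^k : σ_{x_j} p ∈ D₀^{k−1}[I] for all j = 1,…,n, and p(f_i) = 0 for all i = 1,…,s}. -/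
open MvPolynomial

noncomputable section

section LinearMap

variable {τ R M : Type*} [CommSemiring R] [AddCommMonoid M] [Module R M]

lemma map_mul_eq_zero_of_map_X_mul_eq_zero {p : MvPolynomial τ R →ₗ[R] M}
    {I : Ideal (MvPolynomial τ R)} (hX : ∀ j, ∀ g ∈ I, p (X j * g) = 0)
    {f : MvPolynomial τ R} (hf : f ∈ I) (hpf : p f = 0) (a : MvPolynomial τ R) :
    p (a * f) = 0 := by
  -- Up to multiples of the variables, which `hX` handles, `a` is its constant term.
  induction a using MvPolynomial.induction_on with
  | C c => rw [← smul_eq_C_mul, map_smul, hpf, smul_zero]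
  | add a b ha hb => rw [add_mul, map_add, ha, hb, add_zero]
  | mul_X a j _ =>
    rw [mul_right_comm, mul_comm]
    exact hX j _ (I.mul_mem_left a hf)

lemma forall_mem_span_map_eq_zero_iff (p : MvPolynomial τ R →ₗ[R] M)
    (S : Set (MvPolynomial τ R)) :
    (∀ f ∈ Ideal.span S, p f = 0) ↔
      (∀ j, ∀ g ∈ Ideal.span S, p (X j * g) = 0) ∧ ∀ f ∈ S, p f = 0 := by
  constructor
  · intro hp
    exact ⟨fun j g hg => hp _ (Ideal.mul_mem_left _ (X j) hg),
      fun f hf => hp f (Ideal.subset_span hf)⟩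
  · rintro ⟨hX, hS⟩ f hf
    induction hf using Submodule.span_induction with
    | mem f hf => exact hS f hf
    | zero => exact map_zero p
    | add f g _ _ hpf hpg => rw [map_add, hpf, hpg, add_zero]
    | smul a f hf hpf => exact map_mul_eq_zero_of_map_X_mul_eq_zero hX hf hpf a

end LinearMap

section TruncatedDual

variable {n : ℕ}

lemma mem_annIdeal_span_iff (S : Set (Rn n)) (p : Module.Dual ℂ (Rn n)) :
    p ∈ annIdeal (Ideal.span S) ↔
      (∀ j, sigma (X j) p ∈ annIdeal (Ideal.span S)) ∧ ∀ f ∈ S, p f = 0 :=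
  forall_mem_span_map_eq_zero_iff p S

lemma mdeg_eq_degree (m : Fin n →₀ ℕ) : mdeg m = m.degree := rfl

lemma sigma_monomial_mem_dualTrunc {d : ℕ} {m : Fin n →₀ ℕ} {p : Module.Dual ℂ (Rn n)}
    (hp : p ∈ DualTrunc n (d + mdeg m)) : sigma (monomial m 1) p ∈ DualTrunc n d := by
  intro m' hm'
  have hdeg : d + mdeg m < mdeg (m + m') := by
    simp only [mdeg_eq_degree, map_add] at hm' ⊢
    omega
  calc sigma (monomial m 1) p (monomial m' 1)
      = p (monomial m 1 * monomial m' 1) := rfl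
    _ = p (monomial (m + m') 1) := by rw [monomial_mul, one_mul]
    _ = 0 := hp _ hdeg

lemma sigma_X_mem_dualTrunc {d : ℕ} {p : Module.Dual ℂ (Rn n)}
    (hp : p ∈ DualTrunc n (d + 1)) (j : Fin n) : sigma (X j) p ∈ DualTrunc n d := by
  apply sigma_monomial_mem_dualTrunc
  rwa [mdeg_eq_degree, Finsupp.degree_single]

theorem truncated_dual_inductive_general (S : Set (Rn n)) (d : ℕ)
    (p : Module.Dual ℂ (Rn n)) :
    p ∈ truncDualOf (Ideal.span S) (d + 1) ↔
      p ∈ DualTrunc n (d + 1) ∧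
        (∀ j, sigma (X j) p ∈ truncDualOf (Ideal.span S) d) ∧ ∀ f ∈ S, p f = 0 := by
  simp only [truncDualOf, Submodule.mem_inf, mem_annIdeal_span_iff S p, forall_and]
  constructor
  · rintro ⟨hp, hann, hS⟩
    exact ⟨hp, ⟨sigma_X_mem_dualTrunc hp, hann⟩, hS⟩
  · rintro ⟨hp, ⟨_, hann⟩, hS⟩
    exact ⟨hp, hann, hS⟩

end TruncatedDual

/-- For `I = ⟨F⟩` and `k ≥ 1`,
`D₀^k[I] = {p ∈ D₀^k : σ_{x_j} p ∈ D₀^{k−1}[I] for all j, and p(f) = 0 for all f ∈ F}`. -/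
theorem truncated_dual_inductive (n : ℕ) (F : Finset (Rn n)) (k : ℕ) (hk : 1 ≤ k)
    (p : Module.Dual ℂ (Rn n)) :
    p ∈ truncDualOf (Ideal.span (F : Set (Rn n))) k ↔
      (p ∈ DualTrunc n k ∧
        (∀ j : Fin n, sigma (X j) p ∈ truncDualOf (Ideal.span (F : Set (Rn n))) (k - 1)) ∧
        (∀ f ∈ F, p f = 0)) := by
  obtain ⟨d, rfl⟩ := Nat.exists_eq_add_of_le' hk
  exact truncated_dual_inductive_general (F : Set (Rn n)) d p
end
end

section
/- Let I be an ideal of R = ℂ[x₁,…,xₙ], let ≻ be a graded monomial order on ℕⁿ (a total order compatible with addition on exponent vectors and refining total degree), and let the associated graded local order take the lead monomial of a nonzero g ∈ R to be its ≻-minimal monomial with nonzero coefficient, while the initial term of a nonzero p ∈ D₀ is its ≻-maximal monomial functional with nonzero coefficient. Then for every α ∈ ℕⁿ, the monomial x^α lies in the initial ideal in_≥(IR₀) (the monomial ideal generated by the lead monomials of nonzero elements of the contraction IR₀ ∩ R) if and only if ∂^α is NOT the initial term of any nonzero element of D₀[I]. -/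
open MvPolynomial

noncomputable section

/-!
Write `V` for the span of the monomials `x^γ` with `γ ≻ α`. Multiplying by a unit of the local ring
or by a monomial shifts lead monomials, so `x^α` lies in the initial ideal iff it is itself a lead
monomial of some `f ∈ I`, that is, iff `x^α ∈ I + V`. Dually, `∂^α` is the initial term of `p` iff
`p` kills `V` but not `x^α`; since `≻` refines the degree, any such `p` lies in `D₀`. Both sides
thus concern the subspace `I + V`, and a vector lies outside a subspace iff some functional kills
the subspace but not the vector.
-/

section LowestExponent

variable {σ R : Type*} [CommSemiring R] {lt : (σ →₀ ℕ) → (σ →₀ ℕ) → Prop}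
  {f g : MvPolynomial σ R} {α β : σ →₀ ℕ}

/-- `x^α` is the lead monomial of `f` for the local order associated to `lt`: the version of
`IsLeadMonomial` for arbitrary variables and coefficients. -/
def IsLowestExponent (lt : (σ →₀ ℕ) → (σ →₀ ℕ) → Prop) (f : MvPolynomial σ R)
    (α : σ →₀ ℕ) : Prop :=
  coeff α f ≠ 0 ∧ ∀ γ : σ →₀ ℕ, coeff γ f ≠ 0 → γ ≠ α → lt α γ

lemma isLowestExponent_monomial [Nontrivial R] : IsLowestExponent lt (monomial α (1 : R)) α := by
  classical
  refine ⟨by simp, fun γ hγ hne => absurd ?_ hγ⟩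
  rw [coeff_monomial, if_neg hne.symm]

lemma isLowestExponent_zero_of_eval_ne_zero
    (hdeg : ∀ a b : σ →₀ ℕ, a.degree < b.degree → lt a b) (hf : eval (0 : σ → R) f ≠ 0) :
    IsLowestExponent lt f 0 := by
  refine ⟨?_, fun γ _ hγ => hdeg 0 γ ?_⟩
  · rwa [eval_zero, constantCoeff_eq] at hf
  · rwa [map_zero, Nat.pos_iff_ne_zero, Ne, Finsupp.degree_eq_zero_iff]

lemma IsLowestExponent.lt_add_of_ne [IsTrans (σ →₀ ℕ) lt]
    (hadd : ∀ a b c, lt a b → lt (a + c) (b + c))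
    (hf : IsLowestExponent lt f α) (hg : IsLowestExponent lt g β) {a b : σ →₀ ℕ}
    (ha : coeff a f ≠ 0) (hb : coeff b g ≠ 0) (hne : ¬(a = α ∧ b = β)) :
    lt (α + β) (a + b) := by
  have left (h : a ≠ α) (c : σ →₀ ℕ) : lt (α + c) (a + c) := hadd _ _ _ (hf.2 a ha h)
  have right (h : b ≠ β) (c : σ →₀ ℕ) : lt (c + β) (c + b) := by
    simpa only [add_comm c] using hadd _ _ c (hg.2 b hb h)
  by_cases haα : a = α
  · subst haα
    exact right (fun h => hne ⟨rfl, h⟩) a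
  by_cases hbβ : b = β
  · subst hbβ
    exact left haα b
  · exact _root_.trans (left haα β) (right hbβ a)

lemma IsLowestExponent.mul [NoZeroDivisors R] [IsStrictOrder (σ →₀ ℕ) lt]
    (hadd : ∀ a b c, lt a b → lt (a + c) (b + c))
    (hf : IsLowestExponent lt f α) (hg : IsLowestExponent lt g β) :
    IsLowestExponent lt (f * g) (α + β) := by
  classical
  constructor
  · have unique : UniqueAdd f.support g.support α β := by
      intro a b ha hb hab
      by_contra hne
      have hlt := hf.lt_add_of_ne hadd hg (mem_support_iff.1 ha) (mem_support_iff.1 hb) hne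
      exact irrefl _ (hab ▸ hlt)
    have hcoeff : coeff (α + β) (f * g) = coeff α f * coeff β g :=
      AddMonoidAlgebra.coeff_mul_add_of_uniqueAdd unique
    exact hcoeff ▸ mul_ne_zero hf.1 hg.1
  · intro γ hγ hne
    obtain ⟨a, ha, b, hb, rfl⟩ := Finset.mem_add.1 (support_mul f g (mem_support_iff.2 hγ))
    refine hf.lt_add_of_ne hadd hg (mem_support_iff.1 ha) (mem_support_iff.1 hb) ?_
    rintro ⟨rfl, rfl⟩
    exact hne rfl

end LowestExponent

section InitialIdeal

variable {σ R : Type*} [CommSemiring R] {lt : (σ →₀ ℕ) → (σ →₀ ℕ) → Prop}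

/-- For a domain `R`, the contraction to `R[x]` of the extension of `I` to the ring of fractions
whose denominators do not vanish at the origin: the version of `contraction` for arbitrary variables
and coefficients. -/
def contractionAtOrigin (I : Ideal (MvPolynomial σ R)) : Set (MvPolynomial σ R) :=
  {g | ∃ h : MvPolynomial σ R, eval (0 : σ → R) h ≠ 0 ∧ h * g ∈ I}

/-- The ideal generated by the lead monomials, for the local order associated to `lt`, of the
elements of `contractionAtOrigin I`: the version of `initialIdeal` for arbitrary variables and
coefficients. -/
def localInitialIdeal (lt : (σ →₀ ℕ) → (σ →₀ ℕ) → Prop) (I : Ideal (MvPolynomial σ R)) :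
    Ideal (MvPolynomial σ R) :=
  Ideal.span {q | ∃ g ∈ contractionAtOrigin I, g ≠ 0 ∧
    ∃ β : σ →₀ ℕ, IsLowestExponent lt g β ∧ q = monomial β 1}

lemma localInitialIdeal_eq_span_image (I : Ideal (MvPolynomial σ R)) :
    localInitialIdeal lt I = Ideal.span ((fun β => monomial β (1 : R)) ''
      {β | ∃ g ∈ contractionAtOrigin I, IsLowestExponent lt g β}) := by
  refine congrArg Ideal.span (Set.ext fun q => ⟨?_, ?_⟩)
  · rintro ⟨g, hg, -, β, hβ, rfl⟩
    exact ⟨β, ⟨g, hg, hβ⟩, rfl⟩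
  · rintro ⟨β, ⟨g, hg, hβ⟩, rfl⟩
    exact ⟨g, hg, ne_zero_iff.2 ⟨β, hβ.1⟩, β, hβ, rfl⟩

lemma monomial_mem_localInitialIdeal_iff_exists_mem [Nontrivial R] [NoZeroDivisors R]
    [IsStrictOrder (σ →₀ ℕ) lt]
    (hadd : ∀ a b c, lt a b → lt (a + c) (b + c))
    (hdeg : ∀ a b : σ →₀ ℕ, a.degree < b.degree → lt a b)
    {I : Ideal (MvPolynomial σ R)} {α : σ →₀ ℕ} :
    monomial α (1 : R) ∈ localInitialIdeal lt I ↔ ∃ f ∈ I, IsLowestExponent lt f α := by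
  classical
  rw [localInitialIdeal_eq_span_image]
  constructor
  · intro hα
    obtain ⟨β, ⟨g, ⟨h, hh, hhg⟩, hβ⟩, hβα⟩ :=
      mem_ideal_span_monomial_image.1 hα α (by simp)
    have hlow : IsLowestExponent lt (monomial (α - β) 1 * (h * g)) (α - β + (0 + β)) :=
      isLowestExponent_monomial.mul hadd
        ((isLowestExponent_zero_of_eval_ne_zero hdeg hh).mul hadd hβ)
    rw [zero_add, tsub_add_cancel_of_le hβα] at hlow
    exact ⟨_, I.mul_mem_left _ hhg, hlow⟩
  · rintro ⟨f, hf, hα⟩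
    exact Ideal.subset_span ⟨α, ⟨f, ⟨1, by simp, by rwa [one_mul]⟩, hα⟩, rfl⟩

end InitialIdeal

section HighestExponent

variable {σ R : Type*} [CommSemiring R] {lt : (σ →₀ ℕ) → (σ →₀ ℕ) → Prop} {α : σ →₀ ℕ}
  {p : Module.Dual R (MvPolynomial σ R)}

/-- The functional `p` belongs to the Macaulay dual space `D₀[I]`: the version of `dualOf` for
arbitrary variables and coefficients, as a predicate. -/
def IsMacaulayDual (I : Ideal (MvPolynomial σ R)) (p : Module.Dual R (MvPolynomial σ R)) : Prop :=
  (∃ d : ℕ, ∀ γ : σ →₀ ℕ, d < γ.degree → p (monomial γ 1) = 0) ∧ ∀ f ∈ I, p f = 0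

/-- `∂^α` is, up to a scalar, the initial term of the functional `p`: the version of `IsInitialOf`
for arbitrary variables and coefficients. -/
def IsHighestExponent (lt : (σ →₀ ℕ) → (σ →₀ ℕ) → Prop) (p : Module.Dual R (MvPolynomial σ R))
    (α : σ →₀ ℕ) : Prop :=
  p (monomial α 1) ≠ 0 ∧ ∀ β : σ →₀ ℕ, p (monomial β 1) ≠ 0 → β ≠ α → lt β α

lemma isHighestExponent_iff_forall_lt [IsStrictTotalOrder (σ →₀ ℕ) lt] :
    IsHighestExponent lt p α ↔
      p (monomial α 1) ≠ 0 ∧ ∀ γ, lt α γ → p (monomial γ 1) = 0 := by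
  refine and_congr_right fun _ => ⟨fun hmax γ hγ => ?_, fun hvanish β hβ hne => ?_⟩
  · by_contra hpγ
    exact asymm hγ (hmax γ hpγ (ne_of_irrefl' hγ))
  · by_contra hβα
    exact hne (Std.Trichotomous.trichotomous (r := lt) β α hβα (mt (hvanish β) hβ))

lemma mem_dualAnnihilator_restrictSupport_iff {s : Set (σ →₀ ℕ)} :
    p ∈ (restrictSupport R s).dualAnnihilator ↔ ∀ γ ∈ s, p (monomial γ 1) = 0 := by
  rw [restrictSupport_eq_span, ← SetLike.mem_coe, Submodule.coe_dualAnnihilator_span]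
  simp [Set.subset_def]

lemma isMacaulayDual_and_isHighestExponent_iff [IsStrictTotalOrder (σ →₀ ℕ) lt]
    (hdeg : ∀ a b : σ →₀ ℕ, a.degree < b.degree → lt a b) {I : Ideal (MvPolynomial σ R)} :
    IsMacaulayDual I p ∧ IsHighestExponent lt p α ↔
      p ∈ (I.restrictScalars R ⊔ restrictSupport R {γ | lt α γ}).dualAnnihilator ∧
        p (monomial α 1) ≠ 0 := by
  rw [Submodule.dualAnnihilator_sup_eq, Submodule.mem_inf, Submodule.mem_dualAnnihilator,
    mem_dualAnnihilator_restrictSupport_iff, isHighestExponent_iff_forall_lt]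
  constructor
  · rintro ⟨⟨-, hI⟩, hα, hvanish⟩
    exact ⟨⟨hI, hvanish⟩, hα⟩
  · rintro ⟨⟨hI, hvanish⟩, hα⟩
    exact ⟨⟨⟨α.degree, fun γ hγ => hvanish γ (hdeg α γ hγ)⟩, hI⟩, hα, hvanish⟩

end HighestExponent

section Duality

variable {σ K : Type*} [Field K] {lt : (σ →₀ ℕ) → (σ →₀ ℕ) → Prop}

lemma exists_mem_isLowestExponent_iff [Std.Irrefl lt] (W : Submodule K (MvPolynomial σ K))
    (α : σ →₀ ℕ) :
    (∃ f ∈ W, IsLowestExponent lt f α) ↔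
      monomial α 1 ∈ W ⊔ restrictSupport K {γ | lt α γ} := by
  classical
  constructor
  · rintro ⟨f, hf, hα, hlow⟩
    have htail : monomial α 1 - (coeff α f)⁻¹ • f ∈ restrictSupport K {γ | lt α γ} := by
      refine (mem_restrictSupport_iff K).2 fun γ hγ => ?_
      have hcoeff := mem_support_iff.1 hγ
      rw [coeff_sub, coeff_monomial, coeff_smul, smul_eq_mul] at hcoeff
      rcases eq_or_ne γ α with rfl | hne
      · simp [hα] at hcoeff
      · rw [if_neg hne.symm, zero_sub, neg_ne_zero] at hcoeff
        exact hlow γ (right_ne_zero_of_mul hcoeff) hne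
    exact Submodule.mem_sup.2 ⟨_, W.smul_mem _ hf, _, htail, add_sub_cancel _ _⟩
  · intro hα
    obtain ⟨f, hf, v, hv, hfv⟩ := Submodule.mem_sup.1 hα
    have hlt (γ : σ →₀ ℕ) (hγ : coeff γ v ≠ 0) : lt α γ := hv (mem_support_iff.2 hγ)
    have hv_α : coeff α v = 0 := by_contra fun h => irrefl α (hlt α h)
    obtain rfl : f = monomial α 1 - v := eq_sub_of_add_eq hfv
    refine ⟨_, hf, by simp [hv_α], fun γ hγ hne => hlt γ ?_⟩
    rwa [coeff_sub, coeff_monomial, if_neg hne.symm, zero_sub, neg_ne_zero] at hγ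

theorem monomial_mem_initial_ideal_iff_general [IsStrictTotalOrder (σ →₀ ℕ) lt]
    (hadd : ∀ a b c, lt a b → lt (a + c) (b + c))
    (hdeg : ∀ a b : σ →₀ ℕ, a.degree < b.degree → lt a b)
    (I : Ideal (MvPolynomial σ K)) (α : σ →₀ ℕ) :
    monomial α (1 : K) ∈ localInitialIdeal lt I ↔
      ¬ ∃ p, IsMacaulayDual I p ∧ p ≠ 0 ∧ IsHighestExponent lt p α := by
  have hnonzero (p : Module.Dual K (MvPolynomial σ K)) :
      (p ≠ 0 ∧ IsHighestExponent lt p α) ↔ IsHighestExponent lt p α :=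
    and_iff_right_of_imp fun hp => by rintro rfl; exact hp.1 rfl
  calc monomial α (1 : K) ∈ localInitialIdeal lt I
      ↔ ∃ f ∈ I.restrictScalars K, IsLowestExponent lt f α :=
        monomial_mem_localInitialIdeal_iff_exists_mem hadd hdeg
    _ ↔ monomial α 1 ∈ I.restrictScalars K ⊔ restrictSupport K {γ | lt α γ} :=
        exists_mem_isLowestExponent_iff _ _
    _ ↔ ∀ p ∈ (I.restrictScalars K ⊔ restrictSupport K {γ | lt α γ}).dualAnnihilator,
          p (monomial α 1) = 0 :=
        (Subspace.forall_mem_dualAnnihilator_apply_eq_zero_iff _ _).symm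
    _ ↔ ¬ ∃ p, IsMacaulayDual I p ∧ p ≠ 0 ∧ IsHighestExponent lt p α := by
        simp only [hnonzero, isMacaulayDual_and_isHighestExponent_iff hdeg, not_exists, not_and,
          not_not]

end Duality

lemma IsGradedMonomialOrder.isStrictTotalOrder {n : ℕ} {lt : (Fin n →₀ ℕ) → (Fin n →₀ ℕ) → Prop}
    (hlt : IsGradedMonomialOrder lt) : IsStrictTotalOrder (Fin n →₀ ℕ) lt where
  trichotomous a b hab hba := by_contra fun hne => (hlt.total a b hne).elim hab hba
  irrefl := hlt.irrefl
  trans := hlt.trans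

/-- `x^α ∈ in_≥(IR₀)` iff `∂^α` is not the initial term of any nonzero
element of `D₀[I]`. -/
theorem monomial_mem_initial_ideal_iff (n : ℕ) (I : Ideal (Rn n))
    (lt : (Fin n →₀ ℕ) → (Fin n →₀ ℕ) → Prop) (hlt : IsGradedMonomialOrder lt)
    (α : Fin n →₀ ℕ) :
    monomial α (1 : ℂ) ∈ initialIdeal lt I ↔
      ¬ ∃ p ∈ dualOf I, p ≠ 0 ∧ IsInitialOf lt p α := by
  have := hlt.isStrictTotalOrder
  exact monomial_mem_initial_ideal_iff_general hlt.add_compat hlt.deg_compat I α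
end
end
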